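/- Refuting a threshold: let T_new and T_old be two terminating transition systems sharing an input type X, input set Θ₀, and initial-state maps ι_new, ι_old. Suppose χ_new is an anti-potential function for T_new, φ_old is a potential function for T_old, and t ∈ ℝ satisfies χ_new(ι_new x) − φ_old(ι_old x) > t for some x ∈ Θ₀. Then t is not a threshold for the DiffCost problem: there exist an input x ∈ Θ₀, a run ρ_new from ι_new x in T_new and a run ρ_old from ι_old x in T_old with Cost(ρ_new) − Cost(ρ_old) > t. -/

import Mathlib

/-- A run of the transition system from state `s`. -/
def IsRun {S : Type*} (step : S → S → Prop) (s : S) (ρ : ℕ → S) : Prop :=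
  ρ 0 = s ∧ ∀ n, step (ρ n) (ρ (n + 1))

/-- `s'` is reachable from `s`. -/
def ReachableFrom {S : Type*} (step : S → S → Prop) (s s' : S) : Prop :=
  ∃ ρ n, IsRun step s ρ ∧ ρ n = s'

/-- `s'` is reachable from some initial state in `Init`. -/
def Reachable {S : Type*} (step : S → S → Prop) (Init : Set S) (s' : S) : Prop :=
  ∃ s ∈ Init, ReachableFrom step s s'

/-- The system is terminating: every run from a reachable state visits a terminal state. -/
def Terminating {S : Type*} (step : S → S → Prop) (Term Init : Set S) : Prop :=
  ∀ s, Reachable step Init s → ∀ ρ, IsRun step s ρ → ∃ n, ρ n ∈ Term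

/-- The cost of a run: `c (ρ N) - c (ρ 0)` where `N` is the least index with `ρ N ∈ Term`. -/
noncomputable def RunCost {S : Type*} (Term : Set S) (c : S → ℤ) (ρ : ℕ → S) : ℤ :=
  c (ρ (sInf {n | ρ n ∈ Term})) - c (ρ 0)

/-- Potential function: sufficiency preservation and sufficiency on termination. -/
def IsPF {S : Type*} (step : S → S → Prop) (Term Init : Set S) (c : S → ℤ)
    (φ : S → ℝ) : Prop :=
  (∀ s s', Reachable step Init s → step s s' →
    φ s ≥ φ s' + ((c s' : ℝ) - (c s : ℝ))) ∧
  (∀ s, Reachable step Init s → s ∈ Term → φ s ≥ 0)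

/-- Anti-potential function: insufficiency preservation and insufficiency on termination. -/
def IsAntiPF {S : Type*} (step : S → S → Prop) (Term Init : Set S) (c : S → ℤ)
    (χ : S → ℝ) : Prop :=
  (∀ s s', Reachable step Init s → step s s' →
    χ s ≤ χ s' + ((c s' : ℝ) - (c s : ℝ))) ∧
  (∀ s, Reachable step Init s → s ∈ Term → χ s ≤ 0)

/-- `t` is a threshold for the DiffCost problem. -/
noncomputable def IsThreshold {Sn So X : Type*}
    (stepN : Sn → Sn → Prop) (TermN : Set Sn) (cN : Sn → ℤ)
    (stepO : So → So → Prop) (TermO : Set So) (cO : So → ℤ)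
    (Θ₀ : Set X) (ιN : X → Sn) (ιO : X → So) (t : ℝ) : Prop :=
  ∀ x ∈ Θ₀, ∀ ρN : ℕ → Sn, IsRun stepN (ιN x) ρN →
    ∀ ρO : ℕ → So, IsRun stepO (ιO x) ρO →
      ((RunCost TermN cN ρN : ℝ) - (RunCost TermO cO ρO : ℝ)) ≤ t

theorem exists_isRun {S : Type*} {step : S → S → Prop} (htotal : ∀ s, ∃ s', step s s') (s : S) :
    ∃ ρ, IsRun step s ρ := by
  choose next hnext using htotal
  refine ⟨fun n => next^[n] s, rfl, fun n => ?_⟩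
  simpa only [Function.iterate_succ_apply'] using hnext (next^[n] s)

theorem IsRun.reachable {S : Type*} {step : S → S → Prop} {Init : Set S} {s : S} {ρ : ℕ → S}
    (hρ : IsRun step s ρ) (hs : s ∈ Init) (n : ℕ) : Reachable step Init (ρ n) :=
  ⟨s, hs, ρ, n, hρ, rfl⟩

/-- An anti-potential function bounds the cost of every run from below. -/
theorem IsAntiPF.le_runCost {S : Type*} {step : S → S → Prop} {Term Init : Set S} {c : S → ℤ}
    {χ : S → ℝ} (hχ : IsAntiPF step Term Init c χ) (hterm : Terminating step Term Init)
    {s : S} (hs : s ∈ Init) {ρ : ℕ → S} (hρ : IsRun step s ρ) :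
    χ s ≤ (RunCost Term c ρ : ℝ) := by
  have hbound : ∀ n, χ s ≤ χ (ρ n) + ((c (ρ n) : ℝ) - (c (ρ 0) : ℝ)) := by
    intro n
    induction n with
    | zero => simp [hρ.1]
    | succ n ih => linarith [hχ.1 _ _ (hρ.reachable hs n) (hρ.2 n)]
  have hmem : ρ (sInf {n | ρ n ∈ Term}) ∈ Term :=
    Nat.sInf_mem (s := {n | ρ n ∈ Term})
      (hterm s (hρ.1 ▸ hρ.reachable hs 0) ρ hρ)
  have hend := hχ.2 _ (hρ.reachable hs _) hmem
  unfold RunCost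
  push_cast
  linarith [hbound (sInf {n | ρ n ∈ Term})]

/-- Negating a potential function gives an anti-potential function for the negated cost. -/
theorem IsPF.neg {S : Type*} {step : S → S → Prop} {Term Init : Set S} {c : S → ℤ}
    {φ : S → ℝ} (hφ : IsPF step Term Init c φ) :
    IsAntiPF step Term Init (-c) (-φ) := by
  refine ⟨fun s s' hs hstep => ?_, fun s hs hT => ?_⟩
  · simp only [Pi.neg_apply, Int.cast_neg]
    linarith [hφ.1 s s' hs hstep]
  · simpa using hφ.2 s hs hT

/-- A potential function bounds the cost of every run from above. -/
theorem IsPF.runCost_le {S : Type*} {step : S → S → Prop} {Term Init : Set S} {c : S → ℤ}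
    {φ : S → ℝ} (hφ : IsPF step Term Init c φ) (hterm : Terminating step Term Init)
    {s : S} (hs : s ∈ Init) {ρ : ℕ → S} (hρ : IsRun step s ρ) :
    (RunCost Term c ρ : ℝ) ≤ φ s := by
  have h := hφ.neg.le_runCost hterm hs hρ
  simp only [RunCost, Pi.neg_apply] at h ⊢
  push_cast at h ⊢
  linarith

/-- refuting a threshold via an anti-PF for the new system and a PF for
the old system. -/
theorem refute_threshold {Sn So X : Type*}
    (stepN : Sn → Sn → Prop) (TermN : Set Sn) (cN : Sn → ℤ)
    (stepO : So → So → Prop) (TermO : Set So) (cO : So → ℤ)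
    (Θ₀ : Set X) (ιN : X → Sn) (ιO : X → So)
    (htotalN : ∀ s : Sn, ∃ s', stepN s s')
    (htotalO : ∀ s : So, ∃ s', stepO s s')
    (hTermN : ∀ s ∈ TermN, ∀ s', stepN s s' → s' = s)
    (hTermO : ∀ s ∈ TermO, ∀ s', stepO s s' → s' = s)
    (hterminatingN : Terminating stepN TermN (ιN '' Θ₀))
    (hterminatingO : Terminating stepO TermO (ιO '' Θ₀))
    (χN : Sn → ℝ) (hχN : IsAntiPF stepN TermN (ιN '' Θ₀) cN χN)
    (φO : So → ℝ) (hφO : IsPF stepO TermO (ιO '' Θ₀) cO φO)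
    (t : ℝ) (ht : ∃ x ∈ Θ₀, χN (ιN x) - φO (ιO x) > t) :
    ∃ x ∈ Θ₀, ∃ ρN : ℕ → Sn, IsRun stepN (ιN x) ρN ∧
      ∃ ρO : ℕ → So, IsRun stepO (ιO x) ρO ∧
        ((RunCost TermN cN ρN : ℝ) - (RunCost TermO cO ρO : ℝ)) > t := by
  obtain ⟨x, hx, hlt⟩ := ht
  obtain ⟨ρN, hρN⟩ := exists_isRun htotalN (ιN x)
  obtain ⟨ρO, hρO⟩ := exists_isRun htotalO (ιO x)
  refine ⟨x, hx, ρN, hρN, ρO, hρO, ?_⟩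
  have hN := hχN.le_runCost hterminatingN (Set.mem_image_of_mem ιN hx) hρN
  have hO := hφO.runCost_le hterminatingO (Set.mem_image_of_mem ιO hx) hρO
  linarith
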